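/- Let (E,ℒ,ℬ) be a weakly left-resolving labelled space with ℬ closed under relative complements, let α be a nonempty finite labelled path and β ∈ ℒ^{≤∞}(E) be such that αβ ∈ ℒ^{≤∞}(E). Then H_{[α]β} ∘ G_{(α)β} is the identity map on T_{(α)β} and G_{(α)β} ∘ H_{[α]β} is the identity map on T_{αβ}; in particular, G_{(α)β} : T_{(α)β} → T_{αβ} is a bijection with inverse H_{[α]β}. -/

import Mathlib

/-!
The map `(β, X, β) ↦ (αβ, X, αβ)` is an order isomorphism from the elements of `E(S)` below
`(ω, r(α), ω)` onto the elements below `(α, r(α), α)`: both consist of sets `X ∈ ℬ` contained in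
`r(αβ) = r(r(α), β)`. A filter containing an element is determined by its part below that element,
so the shift induces a bijection between the filters containing `(α, r(α), α)` and those containing
`(ω, r(α), ω)`; this correspondence is the predicate `LabelledSpace.Shifted`. The maps `G` and `H`
are the two directions of it (`Gmap_eq`, `Hmap_eq`), so they are mutually inverse.

It remains to see that `G` and `H` respect the sets of tight filters involved.

* `E(S)` is a meet semilattice with `ESmul` as meet; here weak left-resolvingness is used. Multiplying
  covers by an element of the filter shows that tightness can be tested below a fixed element of the
  filter (`tight_of_below`), where it is transported by the order isomorphism (`Shifted.tight_left`,
  `Shifted.tight_right`).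
* Belonging to `T_w` means being tight and having elements exactly over the initial subwords of `w`,
  with a possible exception at the empty word (`mem_Tw_iff`), and this is visibly compatible with the
  shift.
* If `ξ` is tight and `ξ₀` is nonempty, then `ξ₀` is an ultrafilter (`IsTightESFilter.ultra`), because
  `Y ∩ X` and `Y ∖ X` cover `Y`; here closure under relative complements is used. Hence `H` lands
  in `T_{(α)w}`.
-/

open Set

/-- A filter in the sub-poset `P` of a powerset, ordered by inclusion, with least
element `∅`: nonempty, upward-closed within `P`, downward-directed, not containing `∅`. -/
def IsFilterIn {V : Type*} (P F : Set (Set V)) : Prop :=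
  F ⊆ P ∧ F.Nonempty ∧ ∅ ∉ F ∧
    (∀ X ∈ F, ∀ Y ∈ P, X ⊆ Y → Y ∈ F) ∧
    (∀ X ∈ F, ∀ Y ∈ F, ∃ Z ∈ F, Z ⊆ X ∧ Z ⊆ Y)

/-- An ultrafilter in `P` is a maximal filter in `P`. -/
def IsUltrafilterIn {V : Type*} (P F : Set (Set V)) : Prop :=
  IsFilterIn P F ∧ ∀ G : Set (Set V), IsFilterIn P G → F ⊆ G → G = F

/-- A labelled graph: a directed graph with source, range and a surjective labelling map. -/
structure LGraph (V Edg A : Type*) where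
  src : Edg → V
  rng : Edg → V
  lbl : Edg → A
  lbl_surj : Function.Surjective lbl

namespace LGraph

variable {V Edg A : Type*} (G : LGraph V Edg A)

/-- A finite path: a list of composable edges. -/
def IsPath (p : List Edg) : Prop := p.Chain' fun e f => G.rng e = G.src f

/-- The relative range `r(S, α)`, with the convention `r(S, ω) = S`. -/
def relR (S : Set V) : List A → Set V
  | [] => S
  | a :: w =>
      {v | ∃ p : List Edg, G.IsPath p ∧ p.map G.lbl = a :: w ∧
        ∃ h : p ≠ [], G.src (p.head h) ∈ S ∧ G.rng (p.getLast h) = v}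

/-- `α ∈ ℒ*(E)` : a finite labelled path (including the empty word). -/
def IsLbl (α : List A) : Prop := ∃ p : List Edg, G.IsPath p ∧ p.map G.lbl = α

/-- An infinite labelled path. -/
def IsLblInf (α : ℕ → A) : Prop :=
  ∃ p : ℕ → Edg, (∀ n, G.rng (p n) = G.src (p (n + 1))) ∧ ∀ n, G.lbl (p n) = α n

end LGraph

/-- A labelled space: a labelled graph together with an accommodating family `ℬ`. -/
structure LabelledSpace (V Edg A : Type*) extends LGraph V Edg A where
  ℬ : Set (Set V)
  inter_mem : ∀ ⦃X Y : Set V⦄, X ∈ ℬ → Y ∈ ℬ → X ∩ Y ∈ ℬ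
  union_mem : ∀ ⦃X Y : Set V⦄, X ∈ ℬ → Y ∈ ℬ → X ∪ Y ∈ ℬ
  range_mem : ∀ α : List A, α ≠ [] → toLGraph.IsLbl α → toLGraph.relR Set.univ α ∈ ℬ
  relR_mem : ∀ ⦃X : Set V⦄, X ∈ ℬ → ∀ α : List A, toLGraph.IsLbl α → toLGraph.relR X α ∈ ℬ

/-- Words of length `≤ ∞`: finite words are lists, infinite words are sequences. -/
abbrev LWord (A : Type*) := List A ⊕ (ℕ → A)

/-- The length of a word in `ℕ∞`. -/
def wlen {A : Type*} : LWord A → ℕ∞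
  | .inl l => (l.length : ℕ∞)
  | .inr _ => (⊤ : ℕ∞)

/-- `α_{1,n}` : the initial subword of length `n`. -/
def wtake {A : Type*} : LWord A → ℕ → List A
  | .inl l, n => l.take n
  | .inr f, n => (List.range n).map f

/-- Concatenation of a finite word with a word. -/
def wappend {A : Type*} (α : List A) : LWord A → LWord A
  | .inl l => .inl (α ++ l)
  | .inr f => .inr fun n => if h : n < α.length then α.get ⟨n, h⟩ else f (n - α.length)

namespace LabelledSpace

variable {V Edg A : Type*} (L : LabelledSpace V Edg A)

abbrev relR : Set V → List A → Set V := L.toLGraph.relR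

abbrev IsLbl : List A → Prop := L.toLGraph.IsLbl

/-- `r(α)` : the range of a word. -/
def wr (α : List A) : Set V := L.relR Set.univ α

/-- Membership in `ℒ^{≤∞}(E)`. -/
def IsLWord : LWord A → Prop
  | .inl l => L.IsLbl l
  | .inr f => L.toLGraph.IsLblInf f

/-- Weakly left-resolving. -/
def WeaklyLeftResolving : Prop :=
  ∀ ⦃X Y : Set V⦄, X ∈ L.ℬ → Y ∈ L.ℬ → ∀ α : List A, α ≠ [] →
    L.relR (X ∩ Y) α = L.relR X α ∩ L.relR Y α

/-- `ℬ` is closed under relative complements. -/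
def ClosedUnderRelComplements : Prop :=
  ∀ ⦃X Y : Set V⦄, X ∈ L.ℬ → Y ∈ L.ℬ → X \ Y ∈ L.ℬ

/-- `ℬ_α = {A ∈ ℬ : A ⊆ r(α)}`. -/
def Bw (α : List A) : Set (Set V) := {X | X ∈ L.ℬ ∧ X ⊆ L.wr α}

/-- `X_α` : the set of ultrafilters in `ℬ_α`. -/
def Xw (α : List A) : Set (Set (Set V)) := {F | IsUltrafilterIn (L.Bw α) F}

/-- `X_{(α)β} = {F ∈ X_β : r(αβ) ∈ F}`, with the convention `X_{(ω)β} = X_β`. -/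
def XP (α β : List A) : Set (Set (Set V)) :=
  match α with
  | [] => L.Xw β
  | a :: l => {F | F ∈ L.Xw β ∧ L.wr ((a :: l) ++ β) ∈ F}

/-- `g_{(α)β}(F) = {C ∩ r(αβ) : C ∈ F}`. -/
def gmap (α β : List A) (F : Set (Set V)) : Set (Set V) :=
  {D | ∃ C ∈ F, D = C ∩ L.wr (α ++ β)}

/-- `h_{[α]β}(F)` : the upward closure of `F` in `ℬ_β` (only depends on `β`). -/
def hmap (β : List A) (F : Set (Set V)) : Set (Set V) :=
  {D | D ∈ L.Bw β ∧ ∃ C ∈ F, C ⊆ D}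

/-- `f_{β[γ]}(F) = {A ∈ ℬ_β : r(A,γ) ∈ F}`. -/
def fmap (β γ : List A) (F : Set (Set V)) : Set (Set V) :=
  {X | X ∈ L.Bw β ∧ L.relR X γ ∈ F}

/-- `X_α^{sink}`. -/
def Xsink (α : List A) : Set (Set (Set V)) :=
  {F | F ∈ L.Xw α ∧ ∀ b : A, ∃ X ∈ F, L.relR X [b] = ∅}

/-- A complete family (of filters) for the word `w`. -/
def IsCompleteFamily (w : LWord A) (F : ℕ → Set (Set V)) : Prop :=
  (∀ n : ℕ, 0 < n → (n : ℕ∞) ≤ wlen w → IsFilterIn (L.Bw (wtake w n)) (F n)) ∧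
  (IsFilterIn (L.Bw []) (F 0) ∨ F 0 = ∅) ∧
  ∀ n : ℕ, (n : ℕ∞) < wlen w →
    F n = {X | X ∈ L.Bw (wtake w n) ∧ L.relR X ((wtake w (n + 1)).drop n) ∈ F (n + 1)}

/-- A complete family of ultrafilters for the word `w`. -/
def IsCompleteUltraFamily (w : LWord A) (F : ℕ → Set (Set V)) : Prop :=
  (∀ n : ℕ, 0 < n → (n : ℕ∞) ≤ wlen w → IsUltrafilterIn (L.Bw (wtake w n)) (F n)) ∧
  (IsUltrafilterIn (L.Bw []) (F 0) ∨ F 0 = ∅) ∧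
  ∀ n : ℕ, (n : ℕ∞) < wlen w →
    F n = {X | X ∈ L.Bw (wtake w n) ∧ L.relR X ((wtake w (n + 1)).drop n) ∈ F (n + 1)}

/-- Membership in `E(S)`: `none` is the zero element, `some (α, X)` stands for `(α, X, α)`. -/
def ESmem : Option (List A × Set V) → Prop
  | none => True
  | some p => p.2 ∈ L.Bw p.1 ∧ p.2 ≠ ∅

/-- `E(S) ∖ {0}`. -/
def ESnz : Set (Option (List A × Set V)) := {p | L.ESmem p ∧ p ≠ none}

/-- The natural order on `E(S)`: `(α,A,α) ≤ (β,B,β)` iff `α = βα'` and `A ⊆ r(B,α')`. -/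
def ESle : Option (List A × Set V) → Option (List A × Set V) → Prop
  | none, _ => True
  | some _, none => False
  | some p, some q => ∃ γ : List A, p.1 = q.1 ++ γ ∧ p.2 ⊆ L.relR q.2 γ

open Classical in
/-- The product in the semilattice `E(S)`. -/
noncomputable def ESmul :
    Option (List A × Set V) → Option (List A × Set V) → Option (List A × Set V)
  | none, _ => none
  | some _, none => none
  | some p, some q =>
    if p.1 <+: q.1 then
      if L.relR p.2 (q.1.drop p.1.length) ∩ q.2 = ∅ then none
      else some (q.1, L.relR p.2 (q.1.drop p.1.length) ∩ q.2)
    else if q.1 <+: p.1 then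
      if p.2 ∩ L.relR q.2 (p.1.drop q.1.length) = ∅ then none
      else some (p.1, p.2 ∩ L.relR q.2 (p.1.drop q.1.length))
    else none

/-- A filter in `E(S)`. -/
def IsESFilter (ξ : Set (Option (List A × Set V))) : Prop :=
  ξ ⊆ L.ESnz ∧ ξ.Nonempty ∧
    (∀ p ∈ ξ, ∀ q, L.ESmem q → L.ESle p q → q ∈ ξ) ∧
    (∀ p ∈ ξ, ∀ q ∈ ξ, ∃ z ∈ ξ, L.ESle z p ∧ L.ESle z q)

/-- `Z` is a cover for `x` in `E(S)`. -/
def ESCover (x : Option (List A × Set V)) (Z : Set (Option (List A × Set V))) : Prop :=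
  (∀ z ∈ Z, L.ESmem z ∧ L.ESle z x) ∧
  ∀ y, L.ESmem y → y ≠ none → L.ESle y x → ∃ z ∈ Z, L.ESmul y z ≠ none

/-- A tight filter in `E(S)`: every finite cover of an element of the filter meets the filter. -/
def IsTightESFilter (ξ : Set (Option (List A × Set V))) : Prop :=
  L.IsESFilter ξ ∧
    ∀ x ∈ ξ, ∀ Z : Set (Option (List A × Set V)), Z.Finite → L.ESCover x Z →
      (Z ∩ ξ).Nonempty

/-- The filter in `E(S)` associated with the pair `(w, F)` of a word together with a
(complete) family: `ξ = ⋃_n ⋃_{X ∈ F n} ↑(w_{1,n}, X)`. -/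
def filterOf (w : LWord A) (F : ℕ → Set (Set V)) : Set (Option (List A × Set V)) :=
  {p | L.ESmem p ∧
    ∃ n : ℕ, (n : ℕ∞) ≤ wlen w ∧ ∃ X ∈ F n, L.ESle (some (wtake w n, X)) p}

/-- `ξ_n = {X : (w_{1,n}, X, w_{1,n}) ∈ ξ}`. -/
def xiN (_L : LabelledSpace V Edg A) (w : LWord A) (ξ : Set (Option (List A × Set V)))
    (n : ℕ) : Set (Set V) :=
  {X | some (wtake w n, X) ∈ ξ}

/-- `T_w` : the tight filters in `E(S)` whose associated word is `w`. -/
def Tw (w : LWord A) : Set (Set (Option (List A × Set V))) :=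
  {ξ | L.IsTightESFilter ξ ∧
    ∃ F : ℕ → Set (Set V), L.IsCompleteFamily w F ∧ ξ = L.filterOf w F}

/-- `T_{(α)w} = {ξ ∈ T_w : ξ₀ is an ultrafilter in ℬ with r(α) ∈ ξ₀}`, with
`T_{(ω)w} = T_w`. -/
def TwP (α : List A) (w : LWord A) : Set (Set (Option (List A × Set V))) :=
  match α with
  | [] => L.Tw w
  | a :: l =>
    {ξ | ξ ∈ L.Tw w ∧ IsUltrafilterIn (L.Bw []) (L.xiN w ξ 0) ∧ L.wr (a :: l) ∈ L.xiN w ξ 0}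

/-- The family `{J_i}` for `αw` built from a family `{F_n}` for `w`:
`J_{|α|+n} = g_{(α)w_{1,n}}(F_n)` for `1 ≤ n ≤ |w|` and
`J_i = f_{α_{1,i}[α_{i+1,|α|}w₁]}(J_{|α|+1})` for `0 ≤ i ≤ |α|`
(reading `J_{|α|} = g_{(α)ω}(F₀)` and `J_i = f_{α_{1,i}[α_{i+1,|α|}]}(J_{|α|})` when `w = ω`). -/
def Jfamily (α : List A) (w : LWord A) (F : ℕ → Set (Set V)) : ℕ → Set (Set V) :=
  match w with
  | .inl [] => fun i =>
      if i < α.length then L.fmap (α.take i) (α.drop i) (L.gmap α [] (F 0))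
      else L.gmap α [] (F 0)
  | w => fun i =>
      if i ≤ α.length then
        L.fmap (α.take i) (α.drop i ++ wtake w 1) (L.gmap α (wtake w 1) (F 1))
      else L.gmap α (wtake w (i - α.length)) (F (i - α.length))

/-- `G_{(α)w}` as an operation on filters in `E(S)`. -/
def Gmap (α : List A) (w : LWord A) (ξ : Set (Option (List A × Set V))) :
    Set (Option (List A × Set V)) :=
  L.filterOf (wappend α w) (L.Jfamily α w (L.xiN w ξ))

/-- The family `{η_n}` for `w` built from a family for `αw`:
`η_n = h_{[α]w_{1,n}}(F_{|α|+n})`. -/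
def Hfam (α : List A) (w : LWord A) (F : ℕ → Set (Set V)) : ℕ → Set (Set V) :=
  fun n => L.hmap (wtake w n) (F (α.length + n))

/-- `H_{[α]w}` as an operation on filters in `E(S)`. -/
def Hmap (α : List A) (w : LWord A) (ξ : Set (Option (List A × Set V))) :
    Set (Option (List A × Set V)) :=
  L.filterOf w (L.Hfam α w (L.xiN (wappend α w) ξ))

end LabelledSpace

/-- The topology of pointwise convergence on sets of subsets of `V`
(product topology with discrete coordinates, via indicator functions). -/
def memTopology (V : Type*) : TopologicalSpace (Set (Set V)) :=
  show TopologicalSpace (Set V → Prop) from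
    @Pi.topologicalSpace (Set V) (fun _ => Prop) (fun _ => ⊥)


/-! ### Relative ranges -/

namespace LGraph

variable {V Edg A : Type*} (G : LGraph V Edg A)

theorem isPath_singleton (e : Edg) : G.IsPath [e] := List.isChain_singleton e

theorem isPath_cons_cons {e f : Edg} {p : List Edg} :
    G.IsPath (e :: f :: p) ↔ G.rng e = G.src f ∧ G.IsPath (f :: p) := List.isChain_cons_cons

/-- Relative ranges can be computed one letter at a time. -/
theorem relR_cons (S : Set V) (a : A) (w : List A) :
    G.relR S (a :: w) = G.relR {v | ∃ e, G.lbl e = a ∧ G.src e ∈ S ∧ G.rng e = v} w := by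
  cases w with
  | nil =>
    ext v
    constructor
    · rintro ⟨p, hp, hl, hne, hs, hr⟩
      match p, hne with
      | [e], _ => exact ⟨e, by simpa using hl, by simpa using hs, by simpa using hr⟩
      | e :: f :: p, _ => simp at hl
    · rintro ⟨e, he, hs, hr⟩
      exact ⟨[e], G.isPath_singleton e, by simpa using he, by simp, by simpa using hs, by simpa using hr⟩
  | cons b w =>
    ext v
    constructor
    · rintro ⟨p, hp, hl, hne, hs, hr⟩
      match p, hne with
      | [e], _ => simp at hl
      | e :: f :: p, _ =>
        rw [isPath_cons_cons] at hp
        simp only [List.map_cons, List.cons.injEq] at hl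
        exact ⟨f :: p, hp.2, by simpa using hl.2, by simp,
          ⟨e, hl.1, by simpa using hs, by simpa using hp.1⟩, by simpa using hr⟩
    · rintro ⟨p, hp, hl, hne, ⟨e, he, hs, her⟩, hr⟩
      match p, hne with
      | f :: p, _ =>
        refine ⟨e :: f :: p, ?_, ?_, by simp, by simpa using hs, by simpa using hr⟩
        · rw [isPath_cons_cons]
          exact ⟨by simpa using her, hp⟩
        · simpa [he] using hl

theorem relR_mono {S T : Set V} (h : S ⊆ T) (w : List A) : G.relR S w ⊆ G.relR T w := by
  induction w generalizing S T with
  | nil => exact h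
  | cons a w ih =>
    rw [relR_cons, relR_cons]
    exact ih fun v ⟨e, h1, h2, h3⟩ => ⟨e, h1, h h2, h3⟩

theorem relR_append (S : Set V) (u w : List A) :
    G.relR S (u ++ w) = G.relR (G.relR S u) w := by
  induction u generalizing S with
  | nil => rfl
  | cons a u ih => rw [List.cons_append, relR_cons, relR_cons, ih]

theorem relR_empty (w : List A) : G.relR ∅ w = ∅ := by
  induction w with
  | nil => rfl
  | cons a w ih => rw [relR_cons]; simpa using ih

theorem relR_union (S T : Set V) (w : List A) :
    G.relR (S ∪ T) w = G.relR S w ∪ G.relR T w := by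
  induction w generalizing S T with
  | nil => rfl
  | cons a w ih =>
    rw [relR_cons, relR_cons, relR_cons, ← ih]
    congr 1
    ext v
    constructor
    · rintro ⟨e, h1, h2 | h2, h3⟩
      · exact Or.inl ⟨e, h1, h2, h3⟩
      · exact Or.inr ⟨e, h1, h2, h3⟩
    · rintro (⟨e, h1, h2, h3⟩ | ⟨e, h1, h2, h3⟩)
      · exact ⟨e, h1, Or.inl h2, h3⟩
      · exact ⟨e, h1, Or.inr h2, h3⟩

theorem isLbl_of_relR {S : Set V} {w : List A} (h : (G.relR S w).Nonempty) : G.IsLbl w := by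
  cases w with
  | nil => exact ⟨[], List.isChain_nil, rfl⟩
  | cons a w =>
    obtain ⟨v, p, hp, hl, -⟩ := h
    exact ⟨p, hp, hl⟩

theorem relR_univ_nonempty {w : List A} (hw : w ≠ []) (h : G.IsLbl w) :
    (G.relR Set.univ w).Nonempty := by
  cases w with
  | nil => exact absurd rfl hw
  | cons a w =>
    obtain ⟨p, hp, hl⟩ := h
    have hne : p ≠ [] := by rintro rfl; simp at hl
    exact ⟨_, p, hp, hl, hne, trivial, rfl⟩

end LGraph

/-! ### Words and their finite initial subwords -/

section Words

variable {A : Type*}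

theorem wtake_zero (w : LWord A) : wtake w 0 = [] := by
  cases w <;> simp [wtake]

theorem length_wtake {w : LWord A} {n : ℕ} (h : (n : ℕ∞) ≤ wlen w) :
    (wtake w n).length = n := by
  cases w with
  | inl l => simpa [wtake, wlen] using h
  | inr f => simp [wtake]

theorem take_wtake (w : LWord A) {m n : ℕ} (h : m ≤ n) : (wtake w n).take m = wtake w m := by
  cases w with
  | inl l => simp [wtake, List.take_take, h]
  | inr f => simp [wtake, ← List.map_take, List.take_range, h]

theorem wlen_wappend (α : List A) (w : LWord A) :
    wlen (wappend α w) = (α.length : ℕ∞) + wlen w := by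
  cases w <;> simp [wlen, wappend]

theorem wtake_wappend (α : List A) (w : LWord A) (n : ℕ) :
    wtake (wappend α w) (α.length + n) = α ++ wtake w n := by
  cases w with
  | inl l => simp [wtake, wappend, List.take_append]
  | inr f =>
    apply List.ext_getElem
    · simp [wtake, wappend]
    · intro i h1 h2
      simp [wtake, wappend, List.getElem_append]

/-- The finite word `β` is an initial subword of `w`. -/
def IsPre (w : LWord A) (β : List A) : Prop :=
  (β.length : ℕ∞) ≤ wlen w ∧ wtake w β.length = β

theorem isPre_wtake {w : LWord A} {n : ℕ} (h : (n : ℕ∞) ≤ wlen w) : IsPre w (wtake w n) := by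
  rw [IsPre, length_wtake h]
  exact ⟨h, rfl⟩

theorem IsPre.left {w : LWord A} {β γ : List A} (h : IsPre w (β ++ γ)) : IsPre w β := by
  obtain ⟨h1, h2⟩ := h
  have hle : β.length ≤ (β ++ γ).length := by simp
  refine ⟨le_trans (by exact_mod_cast hle) h1, ?_⟩
  rw [← take_wtake w hle, h2]
  simp

theorem isPre_wappend {α : List A} {w : LWord A} {β : List A} :
    IsPre (wappend α w) (α ++ β) ↔ IsPre w β := by
  unfold IsPre
  rw [List.length_append, wtake_wappend, wlen_wappend, List.append_cancel_left_eq, Nat.cast_add,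
    ENat.add_le_add_iff_left (ENat.natCast_ne_top _)]

theorem wtake_wappend_left (α : List A) (w : LWord A) {i : ℕ} (h : i ≤ α.length) :
    wtake (wappend α w) i = α.take i := by
  rw [← take_wtake _ h, ← Nat.add_zero α.length, wtake_wappend, wtake_zero]
  simp

end Words

namespace LabelledSpace

variable {V Edg A : Type*} {L : LabelledSpace V Edg A}

theorem wr_append (α β : List A) : L.wr (α ++ β) = L.relR (L.wr α) β :=
  L.relR_append _ _ _

theorem wr_append_subset (α β : List A) : L.wr (α ++ β) ⊆ L.wr β := by
  rw [wr_append]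
  exact L.relR_mono (subset_univ _) β

theorem relR_inter (hwlr : L.WeaklyLeftResolving) {X Y : Set V} (hX : X ∈ L.ℬ) (hY : Y ∈ L.ℬ)
    (γ : List A) : L.relR (X ∩ Y) γ = L.relR X γ ∩ L.relR Y γ := by
  rcases eq_or_ne γ [] with rfl | h
  · rfl
  · exact hwlr hX hY γ h

/-- `(αγ, r(A,γ), αγ)` lies in `E(S)` as soon as `A ∈ ℬ_α` and `r(A,γ) ≠ ∅`. -/
theorem relR_mem_Bw {X : Set V} {β γ : List A} (hX : X ∈ L.Bw β) (hne : (L.relR X γ).Nonempty) :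
    L.relR X γ ∈ L.Bw (β ++ γ) := by
  refine ⟨L.relR_mem hX.1 γ (L.isLbl_of_relR hne), ?_⟩
  rw [wr_append]
  exact L.relR_mono hX.2 γ

theorem wr_mem {α : List A} (hα : α ≠ []) (h : (L.wr α).Nonempty) : L.wr α ∈ L.ℬ :=
  L.range_mem α hα (L.isLbl_of_relR h)

/-! ### The semilattice `E(S)` -/

theorem ESle_some {β γ : List A} {X Y : Set V} :
    L.ESle (some (β, X)) (some (γ, Y)) ↔ ∃ δ, β = γ ++ δ ∧ X ⊆ L.relR Y δ := Iff.rfl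

theorem ESmem_some {β : List A} {X : Set V} :
    L.ESmem (some (β, X)) ↔ X ∈ L.Bw β ∧ X ≠ ∅ := Iff.rfl

theorem ESle_of_subset {β : List A} {X Y : Set V} (h : X ⊆ Y) :
    L.ESle (some (β, X)) (some (β, Y)) := ⟨[], by simp, h⟩

theorem ESle_refl (p : Option (List A × Set V)) : L.ESle p p := by
  rcases p with - | ⟨β, X⟩
  · trivial
  · exact ESle_of_subset subset_rfl

theorem ESle_trans {p q r : Option (List A × Set V)} (h1 : L.ESle p q) (h2 : L.ESle q r) :
    L.ESle p r := by
  rcases p with - | ⟨a, X⟩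
  · trivial
  rcases q with - | ⟨b, Y⟩
  · exact h1.elim
  rcases r with - | ⟨c, Z⟩
  · exact h2.elim
  obtain ⟨γ, hγ, hX⟩ := h1
  obtain ⟨δ, hδ, hY⟩ := h2
  dsimp only at hγ hX hδ hY
  refine ⟨δ ++ γ, by simp [hγ, hδ], ?_⟩
  rw [relR, L.relR_append]
  exact hX.trans (L.relR_mono hY γ)

theorem ESnz_some {p : Option (List A × Set V)} (h : p ∈ L.ESnz) :
    ∃ β X, p = some (β, X) ∧ X ∈ L.Bw β ∧ X ≠ ∅ := by
  rcases p with - | ⟨a, X⟩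
  · exact absurd rfl h.2
  · exact ⟨a, X, rfl, h.1⟩

theorem ESmul_prefix (a b : List A) (X Y : Set V) :
    L.ESmul (some (a, X)) (some (a ++ b, Y)) =
      if L.relR X b ∩ Y = ∅ then none else some (a ++ b, L.relR X b ∩ Y) := by
  simp [ESmul]

/-- This also holds for `b = []`, where the product is computed by its first branch. -/
theorem ESmul_suffix (a b : List A) (X Y : Set V) :
    L.ESmul (some (a ++ b, X)) (some (a, Y)) =
      if X ∩ L.relR Y b = ∅ then none else some (a ++ b, X ∩ L.relR Y b) := by
  rcases eq_or_ne b [] with rfl | hb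
  · simp [ESmul, relR, LGraph.relR]
  · have hn : ¬ a ++ b <+: a := fun h => hb (by simpa using h.length_le)
    simp [ESmul, hn]

theorem ESmul_not {a b : List A} (X Y : Set V) (h1 : ¬ a <+: b) (h2 : ¬ b <+: a) :
    L.ESmul (some (a, X)) (some (b, Y)) = none := by
  simp [ESmul, h1, h2]

/-- The product of `E(S)` is a lower bound of its factors and lies in `E(S)`. -/
theorem ESmul_lower {p q : Option (List A × Set V)} (hp : L.ESmem p) (hq : L.ESmem q) :
    L.ESmem (L.ESmul p q) ∧ L.ESle (L.ESmul p q) p ∧ L.ESle (L.ESmul p q) q := by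
  rcases p with - | ⟨a, X⟩
  · exact ⟨trivial, trivial, trivial⟩
  rcases q with - | ⟨b, Y⟩
  · exact ⟨trivial, trivial, trivial⟩
  by_cases h1 : a <+: b
  · obtain ⟨b, rfl⟩ := h1
    rw [ESmul_prefix]
    split_ifs with h
    · exact ⟨trivial, trivial, trivial⟩
    · have hne : (L.relR X b).Nonempty := (nonempty_iff_ne_empty.2 h).left
      exact ⟨⟨⟨L.inter_mem (relR_mem_Bw hp.1 hne).1 hq.1.1, inter_subset_right.trans hq.1.2⟩, h⟩,
        ⟨b, rfl, inter_subset_left⟩, ESle_of_subset inter_subset_right⟩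
  by_cases h2 : b <+: a
  · obtain ⟨a, rfl⟩ := h2
    rw [ESmul_suffix]
    split_ifs with h
    · exact ⟨trivial, trivial, trivial⟩
    · have hne : (L.relR Y a).Nonempty := (nonempty_iff_ne_empty.2 h).right
      exact ⟨⟨⟨L.inter_mem hp.1.1 (relR_mem_Bw hq.1 hne).1, inter_subset_left.trans hp.1.2⟩, h⟩,
        ESle_of_subset inter_subset_left, ⟨a, rfl, inter_subset_right⟩⟩
  · rw [ESmul_not _ _ h1 h2]
    exact ⟨trivial, trivial, trivial⟩

/-- Weak left-resolvingness makes intersections meets: a common lower bound of `(β,X,β)` and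
`(β,Y,β)` is below `(β,X ∩ Y,β)`. -/
theorem ESle_inter (hwlr : L.WeaklyLeftResolving) {m : Option (List A × Set V)}
    {β : List A} {X Y : Set V} (hX : X ∈ L.ℬ) (hY : Y ∈ L.ℬ)
    (h1 : L.ESle m (some (β, X))) (h2 : L.ESle m (some (β, Y))) :
    L.ESle m (some (β, X ∩ Y)) := by
  rcases m with - | ⟨c, Z⟩
  · trivial
  obtain ⟨γ, hγ, hZX⟩ := h1
  obtain ⟨δ, hδ, hZY⟩ := h2
  dsimp only at hγ hδ hZX hZY
  obtain rfl : γ = δ := List.append_cancel_left (hγ.symm.trans hδ)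
  exact ⟨γ, hγ, by rw [relR_inter hwlr hX hY]; exact subset_inter hZX hZY⟩

theorem nonempty_of_ESle {m : Option (List A × Set V)} {β : List A} {X : Set V}
    (hm : m ∈ L.ESnz) (h : L.ESle m (some (β, X))) : X.Nonempty := by
  obtain ⟨c, Z, rfl, -, hZ⟩ := ESnz_some hm
  obtain ⟨γ, -, hγ⟩ := h
  by_contra hX
  rw [not_nonempty_iff_eq_empty] at hX
  dsimp only at hγ
  rw [hX, relR, L.relR_empty] at hγ
  exact hZ (subset_empty_iff.1 hγ)

/-- An element of word `aγ…` below `(a,X,a)` is below `(aγ, r(X,γ), aγ)`. -/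
theorem ESle_relR {m : Option (List A × Set V)} {a γ : List A} {X Y : Set V}
    (h1 : L.ESle m (some (a, X))) (h2 : L.ESle m (some (a ++ γ, Y))) :
    L.ESle m (some (a ++ γ, L.relR X γ)) := by
  rcases m with - | ⟨c, Z⟩
  · trivial
  obtain ⟨δ, hδ, hZX⟩ := h1
  obtain ⟨ε, hε, hZY⟩ := h2
  dsimp only at hδ hε hZX hZY
  obtain rfl : δ = γ ++ ε := by
    apply List.append_cancel_left (as := a)
    rw [← hδ, hε, List.append_assoc]
  exact ⟨ε, hε, by rwa [relR, ← L.relR_append]⟩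

/-- The product of `E(S)` is the greatest lower bound of its factors. -/
theorem le_ESmul (hwlr : L.WeaklyLeftResolving) {m p q : Option (List A × Set V)}
    (hm : m ∈ L.ESnz) (hp : L.ESmem p) (hq : L.ESmem q) (h1 : L.ESle m p) (h2 : L.ESle m q) :
    L.ESle m (L.ESmul p q) := by
  obtain ⟨c, Z, rfl, -, hZ⟩ := ESnz_some hm
  rcases p with - | ⟨a, X⟩
  · exact h1.elim
  rcases q with - | ⟨b, Y⟩
  · exact h2.elim
  have hab : a <+: b ∨ b <+: a := by
    obtain ⟨γ, hγ, -⟩ := h1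
    obtain ⟨δ, hδ, -⟩ := h2
    exact List.prefix_or_prefix_of_prefix ⟨γ, hγ.symm⟩ ⟨δ, hδ.symm⟩
  rcases hab with ⟨b, rfl⟩ | ⟨a, rfl⟩
  · have h3 := ESle_relR h1 h2
    have h4 := ESle_inter hwlr (relR_mem_Bw hp.1 (nonempty_of_ESle hm h3)).1 hq.1.1 h3 h2
    rw [ESmul_prefix, if_neg (nonempty_of_ESle hm h4).ne_empty]
    exact h4
  · have h3 := ESle_relR h2 h1
    have h4 := ESle_inter hwlr hp.1.1 (relR_mem_Bw hq.1 (nonempty_of_ESle hm h3)).1 h1 h3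
    rw [ESmul_suffix, if_neg (nonempty_of_ESle hm h4).ne_empty]
    exact h4

theorem ne_none_of_ESle {m p : Option (List A × Set V)} (hm : m ∈ L.ESnz) (h : L.ESle m p) :
    p ≠ none := by
  rintro rfl
  obtain ⟨c, Z, rfl, -⟩ := ESnz_some hm
  exact h

theorem ESmul_ne_none_iff (hwlr : L.WeaklyLeftResolving) {p q : Option (List A × Set V)}
    (hp : L.ESmem p) (hq : L.ESmem q) :
    L.ESmul p q ≠ none ↔ ∃ m ∈ L.ESnz, L.ESle m p ∧ L.ESle m q := by
  constructor
  · intro h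
    obtain ⟨h1, h2, h3⟩ := ESmul_lower hp hq
    exact ⟨_, ⟨h1, h⟩, h2, h3⟩
  · rintro ⟨m, hm, h1, h2⟩
    exact ne_none_of_ESle hm (le_ESmul hwlr hm hp hq h1 h2)

/-- Covers, described by common nonzero lower bounds instead of products. -/
theorem ESCover_iff (hwlr : L.WeaklyLeftResolving) {x : Option (List A × Set V)}
    {Z : Set (Option (List A × Set V))} :
    L.ESCover x Z ↔ (∀ z ∈ Z, L.ESmem z ∧ L.ESle z x) ∧
      ∀ y ∈ L.ESnz, L.ESle y x → ∃ z ∈ Z, ∃ m ∈ L.ESnz, L.ESle m y ∧ L.ESle m z := by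
  refine and_congr_right fun hZ => ⟨fun h y hy hyx => ?_, fun h y hy hy0 hyx => ?_⟩
  · obtain ⟨z, hz, hyz⟩ := h y hy.1 hy.2 hyx
    exact ⟨z, hz, (ESmul_ne_none_iff hwlr hy.1 (hZ z hz).1).1 hyz⟩
  · obtain ⟨z, hz, hyz⟩ := h y ⟨hy, hy0⟩ hyx
    exact ⟨z, hz, (ESmul_ne_none_iff hwlr hy (hZ z hz).1).2 hyz⟩

/-! ### Filters and tight filters -/

section Filters

variable {ξ : Set (Option (List A × Set V))}

theorem mem_xiN_zero {w : LWord A} {X : Set V} : X ∈ L.xiN w ξ 0 ↔ some ([], X) ∈ ξ := by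
  change some (wtake w 0, X) ∈ ξ ↔ _
  rw [wtake_zero]

theorem IsESFilter.mem_of_le (hξ : L.IsESFilter ξ) {p q : Option (List A × Set V)} (hp : p ∈ ξ)
    (hq : L.ESmem q) (h : L.ESle p q) : q ∈ ξ := hξ.2.2.1 p hp q hq h

theorem IsESFilter.inter_mem (hwlr : L.WeaklyLeftResolving) (hξ : L.IsESFilter ξ) {β : List A}
    {X Y : Set V} (hX : some (β, X) ∈ ξ) (hY : some (β, Y) ∈ ξ) : some (β, X ∩ Y) ∈ ξ := by
  obtain ⟨z, hz, h1, h2⟩ := hξ.2.2.2 _ hX _ hY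
  have hX' := (hξ.1 hX).1
  have hY' := (hξ.1 hY).1
  have h3 := ESle_inter hwlr hX'.1.1 hY'.1.1 h1 h2
  exact hξ.mem_of_le hz ⟨⟨L.inter_mem hX'.1.1 hY'.1.1, inter_subset_left.trans hX'.1.2⟩,
    (nonempty_of_ESle (hξ.1 hz) h3).ne_empty⟩ h3

/-- Relative ranges along the word of a filter stay in the filter. -/
theorem IsESFilter.relR_mem (hξ : L.IsESFilter ξ) {β γ : List A}
    {X Y : Set V} (hX : some (β, X) ∈ ξ) (hY : some (β ++ γ, Y) ∈ ξ) :
    some (β ++ γ, L.relR X γ) ∈ ξ := by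
  obtain ⟨z, hz, h1, h2⟩ := hξ.2.2.2 _ hX _ hY
  have h3 := ESle_relR h1 h2
  have hne := nonempty_of_ESle (hξ.1 hz) h3
  exact hξ.mem_of_le hz ⟨relR_mem_Bw (hξ.1 hX).1.1 hne, hne.ne_empty⟩ h3

theorem IsESFilter.isFilterIn_xiN (hwlr : L.WeaklyLeftResolving) (hξ : L.IsESFilter ξ)
    {w : LWord A} {n : ℕ} (hne : (L.xiN w ξ n).Nonempty) :
    IsFilterIn (L.Bw (wtake w n)) (L.xiN w ξ n) := by
  refine ⟨fun X hX => (hξ.1 hX).1.1, hne, fun h => (hξ.1 h).1.2 rfl, fun X hX Y hY hXY => ?_,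
    fun X hX Y hY => ⟨X ∩ Y, hξ.inter_mem hwlr hX hY, inter_subset_left, inter_subset_right⟩⟩
  exact hξ.mem_of_le hX ⟨hY, fun h => (hξ.1 hX).1.2 (subset_empty_iff.1 (h ▸ hXY))⟩
    (ESle_of_subset hXY)

/-- A filter has word `w` when the words of its elements are exactly the initial subwords of `w`,
except that the empty word need not occur. -/
def HasWord (w : LWord A) (ξ : Set (Option (List A × Set V))) : Prop :=
  (∀ β X, some (β, X) ∈ ξ → IsPre w β) ∧
    ∀ n : ℕ, 0 < n → (n : ℕ∞) ≤ wlen w → ∃ X, some (wtake w n, X) ∈ ξ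

/-- A filter with word `w` is the filter of its own complete family `{ξ_n}`. -/
theorem mem_Tw_iff (hwlr : L.WeaklyLeftResolving) {w : LWord A} :
    ξ ∈ L.Tw w ↔ L.IsTightESFilter ξ ∧ HasWord w ξ := by
  refine and_congr_right fun htight => ?_
  have hξ := htight.1
  constructor
  · rintro ⟨F, hF, rfl⟩
    refine ⟨?_, fun n hn hnw => ?_⟩
    · rintro β X ⟨-, n, hnw, Y, hY, γ, hγ, -⟩
      have h := isPre_wtake hnw
      dsimp only at hγ
      rw [hγ] at h
      exact h.left
    · obtain ⟨hsub, ⟨X, hX⟩, h0, -⟩ := hF.1 n hn hnw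
      exact ⟨X, ⟨hsub hX, fun h => h0 (h ▸ hX)⟩, n, hnw, X, hX, ESle_refl _⟩
  · rintro ⟨ha, hb⟩
    refine ⟨L.xiN w ξ, ⟨fun n hn hnw => hξ.isFilterIn_xiN hwlr (hb n hn hnw), ?_, fun n hnw => ?_⟩,
      ?_⟩
    · rcases (L.xiN w ξ 0).eq_empty_or_nonempty with h | h
      · exact Or.inr h
      · have := hξ.isFilterIn_xiN hwlr h
        rw [wtake_zero] at this
        exact Or.inl this
    · have hsucc : ((n + 1 : ℕ) : ℕ∞) ≤ wlen w := by
        simpa using Order.add_one_le_of_lt hnw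
      have hdec : wtake w n ++ (wtake w (n + 1)).drop n = wtake w (n + 1) := by
        rw [← take_wtake w (Nat.le_succ n), List.take_append_drop]
      obtain ⟨C, hC⟩ := hb (n + 1) n.succ_pos hsucc
      ext X
      constructor
      · intro hX
        rw [← hdec] at hC
        have := hξ.relR_mem hX hC
        rw [hdec] at this
        exact ⟨(hξ.1 hX).1.1, this⟩
      · rintro ⟨hX, hr⟩
        have hle : L.ESle (some (wtake w (n + 1), L.relR X ((wtake w (n + 1)).drop n)))
            (some (wtake w n, X)) := ⟨_, hdec.symm, subset_rfl⟩
        exact hξ.mem_of_le hr ⟨hX, (nonempty_of_ESle (hξ.1 hr) hle).ne_empty⟩ hle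
    · ext p
      constructor
      · intro hp
        obtain ⟨β, X, rfl, -⟩ := ESnz_some (hξ.1 hp)
        obtain ⟨h1, h2⟩ := ha β X hp
        refine ⟨(hξ.1 hp).1, β.length, h1, X, ?_, ?_⟩
        · change some (wtake w β.length, X) ∈ ξ
          rwa [h2]
        · rw [h2]
          exact ESle_refl _
      · rintro ⟨hp, n, -, X, hX, hle⟩
        exact hξ.mem_of_le hX hp hle

/-- Tightness may be tested below a fixed element `x₀` of the filter: multiply a cover of `x` by an
element of the filter below both `x` and `x₀`. -/
theorem tight_of_below (hwlr : L.WeaklyLeftResolving) (hξ : L.IsESFilter ξ)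
    {x₀ : Option (List A × Set V)} (hx₀ : x₀ ∈ ξ)
    (h : ∀ x ∈ ξ, L.ESle x x₀ → ∀ Z : Set (Option (List A × Set V)), Z.Finite → L.ESCover x Z →
      (Z ∩ ξ).Nonempty) : L.IsTightESFilter ξ := by
  refine ⟨hξ, fun x hx Z hZ hcov => ?_⟩
  obtain ⟨t, ht, htx, htx₀⟩ := hξ.2.2.2 x hx x₀ hx₀
  rw [ESCover_iff hwlr] at hcov
  obtain ⟨hZx, hcov⟩ := hcov
  have htm := (hξ.1 ht).1
  obtain ⟨-, ⟨z, hz, rfl⟩, hzξ⟩ := h t ht htx₀ (L.ESmul t '' Z) (hZ.image _) (by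
    rw [ESCover_iff hwlr]
    refine ⟨?_, fun y hy hyt => ?_⟩
    · rintro - ⟨z, hz, rfl⟩
      have := ESmul_lower htm (hZx z hz).1
      exact ⟨this.1, this.2.1⟩
    · obtain ⟨z, hz, m, hm, hmy, hmz⟩ := hcov y hy (ESle_trans hyt htx)
      exact ⟨_, ⟨z, hz, rfl⟩, m, hm, hmy,
        le_ESmul hwlr hm htm (hZx z hz).1 (ESle_trans hmy hyt) hmz⟩)
  exact ⟨z, hz, hξ.mem_of_le hzξ (hZx z hz).1 (ESmul_lower htm (hZx z hz).1).2.2⟩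

/-- For a tight filter `ξ`, the filter `ξ₀` is an ultrafilter if it is nonempty: for `Y ∈ ξ₀` and
`X ∈ ℬ`, the sets `Y ∩ X` and `Y ∖ X` give a cover of `(ω,Y,ω)`. -/
theorem IsTightESFilter.ultra (hwlr : L.WeaklyLeftResolving) (hc : L.ClosedUnderRelComplements)
    (hξ : L.IsTightESFilter ξ) {w : LWord A} (hne : (L.xiN w ξ 0).Nonempty) :
    IsUltrafilterIn (L.Bw []) (L.xiN w ξ 0) := by
  have hfil := hξ.1.isFilterIn_xiN hwlr hne
  rw [wtake_zero] at hfil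
  refine ⟨hfil, fun G hG hle => Subset.antisymm (fun X hX => ?_) hle⟩
  obtain ⟨Y, hY⟩ := hne
  have hYB := hfil.1 hY
  have hXB := hG.1 hX
  have hY' := mem_xiN_zero.1 hY
  let Z : Set (Option (List A × Set V)) :=
    {z | (z = some ([], Y ∩ X) ∨ z = some ([], Y \ X)) ∧ L.ESmem z}
  have hsplit : (Y ∩ X) ∪ (Y \ X) = Y := inter_union_sdiff Y X
  have hI : Y ∩ X ∈ L.Bw [] := ⟨L.inter_mem hYB.1 hXB.1, subset_univ _⟩
  have hD : Y \ X ∈ L.Bw [] := ⟨hc hYB.1 hXB.1, subset_univ _⟩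
  obtain ⟨z, ⟨hz, -⟩, hzξ⟩ := hξ.2 _ hY' Z
    ((Set.toFinite {some ([], Y ∩ X), some ([], Y \ X)}).subset fun z hz => hz.1) (by
      rw [ESCover_iff hwlr]
      refine ⟨?_, fun y hy hyY => ?_⟩
      · rintro z ⟨rfl | rfl, hz⟩
        · exact ⟨hz, ESle_of_subset inter_subset_left⟩
        · exact ⟨hz, ESle_of_subset sdiff_subset⟩
      · obtain ⟨β, C, rfl, hCB, hC⟩ := ESnz_some hy
        obtain ⟨γ, hγ, hCY⟩ := hyY
        obtain rfl : β = γ := hγ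
        dsimp only at hCY
        rw [← hsplit, relR, L.relR_union] at hCY
        have key : ∀ W : Set V, W ∈ L.Bw [] → (C ∩ L.relR W β).Nonempty →
            L.ESmem (some ([], W)) ∧
            ∃ m ∈ L.ESnz, L.ESle m (some (β, C)) ∧ L.ESle m (some ([], W)) := by
          intro W hW hne
          have hmem : some (β, C ∩ L.relR W β) ∈ L.ESnz :=
            ⟨⟨⟨L.inter_mem hCB.1 (relR_mem_Bw hW hne.right).1,
              inter_subset_left.trans hCB.2⟩, hne.ne_empty⟩, by simp⟩
          have hle : L.ESle (some (β, C ∩ L.relR W β)) (some ([], W)) :=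
            ⟨β, rfl, inter_subset_right⟩
          exact ⟨⟨hW, (nonempty_of_ESle hmem hle).ne_empty⟩, _, hmem,
            ESle_of_subset inter_subset_left, hle⟩
        obtain ⟨v, hv⟩ := nonempty_iff_ne_empty.2 hC
        rcases hCY hv with h | h
        · obtain ⟨h1, h2⟩ := key _ hI ⟨v, hv, h⟩
          exact ⟨_, ⟨Or.inl rfl, h1⟩, h2⟩
        · obtain ⟨h1, h2⟩ := key _ hD ⟨v, hv, h⟩
          exact ⟨_, ⟨Or.inr rfl, h1⟩, h2⟩)
  rcases hz with rfl | rfl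
  · exact hfil.2.2.2.1 _ (mem_xiN_zero.2 hzξ) X hXB inter_subset_right
  · obtain ⟨W, hW, h1, h2⟩ := hG.2.2.2.2 _ (hle (mem_xiN_zero.2 hzξ)) _ hX
    have : W = ∅ := subset_empty_iff.1 fun v hv => (h1 hv).2 (h2 hv)
    exact (hG.2.2.1 (this ▸ hW)).elim

end Filters

/-! ### Shifting by `α` -/

/-- The shift `(β,X,β) ↦ (αβ,X,αβ)`. It restricts to an order isomorphism from the elements of
`E(S)` below `(ω,r(α),ω)` onto those below `(α,r(α),α)`. -/
def sh (α : List A) : Option (List A × Set V) → Option (List A × Set V) :=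
  Option.map fun p => (α ++ p.1, p.2)

theorem sh_injective (α : List A) : Function.Injective (sh (V := V) α) := by
  apply Option.map_injective
  rintro ⟨a, X⟩ ⟨b, Y⟩ h
  simpa using h

theorem ESle_sh {α : List A} {p q : Option (List A × Set V)} :
    L.ESle (sh α p) (sh α q) ↔ L.ESle p q := by
  rcases p with - | ⟨a, X⟩
  · exact Iff.rfl
  rcases q with - | ⟨b, Y⟩
  · exact Iff.rfl
  refine exists_congr fun γ => and_congr ?_ Iff.rfl
  simp

theorem ESmem_of_sh {α : List A} {p : Option (List A × Set V)} (h : L.ESmem (sh α p)) :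
    L.ESmem p ∧ L.ESle p (some ([], L.wr α)) := by
  rcases p with - | ⟨a, X⟩
  · exact ⟨trivial, trivial⟩
  · obtain ⟨⟨h1, h2⟩, h3⟩ := h
    dsimp only at h1 h2 h3
    exact ⟨⟨⟨h1, h2.trans (wr_append_subset α a)⟩, h3⟩, a, rfl, by rwa [← wr_append]⟩

theorem ESmem_sh {α : List A} {p : Option (List A × Set V)} (h : L.ESmem p)
    (hle : L.ESle p (some ([], L.wr α))) : L.ESmem (sh α p) := by
  rcases p with - | ⟨a, X⟩
  · trivial
  · obtain ⟨γ, rfl, h2⟩ := hle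
    exact ⟨⟨h.1.1, by rw [wr_append]; exact h2⟩, h.2⟩

theorem sh_ne_none {α : List A} {p : Option (List A × Set V)} : sh α p ≠ none ↔ p ≠ none := by
  cases p <;> simp [sh]

theorem ESnz_sh {α : List A} {p : Option (List A × Set V)} :
    sh α p ∈ L.ESnz ↔ p ∈ L.ESnz ∧ L.ESle p (some ([], L.wr α)) := by
  constructor
  · rintro ⟨h1, h2⟩
    exact ⟨⟨(ESmem_of_sh h1).1, sh_ne_none.1 h2⟩, (ESmem_of_sh h1).2⟩
  · rintro ⟨⟨h1, h2⟩, h3⟩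
    exact ⟨ESmem_sh h1 h3, sh_ne_none.2 h2⟩

theorem exists_sh {α : List A} {p : Option (List A × Set V)} {X : Set V}
    (hle : L.ESle p (some (α, X))) : ∃ q, p = sh α q := by
  rcases p with - | ⟨a, Y⟩
  · exact ⟨none, rfl⟩
  · obtain ⟨γ, h, -⟩ := hle
    exact ⟨some (γ, Y), by simp [sh, ← h]⟩

theorem ESle_top {β : List A} {X : Set V} (h : X ∈ L.Bw β) : L.ESle (some (β, X))
    (some (β, L.wr β)) := ESle_of_subset h.2

theorem sh_le {α : List A} {p : Option (List A × Set V)} (h : L.ESmem (sh α p)) :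
    L.ESle (sh α p) (some (α, L.wr α)) := by
  rcases p with - | ⟨a, X⟩
  · trivial
  · exact ⟨a, rfl, by rw [← wr_append]; exact h.1.2⟩

/-- `ξ` and `η` are filters containing `(α,r(α),α)` and `(ω,r(α),ω)` respectively, which
correspond to each other under the shift by `α`. -/
structure Shifted (L : LabelledSpace V Edg A) (α : List A)
    (ξ η : Set (Option (List A × Set V))) : Prop where
  filt : L.IsESFilter ξ
  filt' : L.IsESFilter η
  top : some (α, L.wr α) ∈ ξ
  top' : some ([], L.wr α) ∈ η
  iff : ∀ p, L.ESmem (sh α p) → (sh α p ∈ ξ ↔ p ∈ η)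

namespace Shifted

variable {α : List A} {ξ η : Set (Option (List A × Set V))}

theorem mem_left (h : L.Shifted α ξ η) {p : Option (List A × Set V)} :
    p ∈ ξ ↔ L.ESmem p ∧ ∃ q ∈ η, L.ESmem (sh α q) ∧ L.ESle (sh α q) p := by
  constructor
  · intro hp
    obtain ⟨z, hz, h1, h2⟩ := h.filt.2.2.2 _ hp _ h.top
    obtain ⟨q, rfl⟩ := exists_sh h2
    have hm := (h.filt.1 hz).1
    exact ⟨(h.filt.1 hp).1, q, (h.iff q hm).1 hz, hm, h1⟩
  · rintro ⟨hp, q, hq, hm, hle⟩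
    exact h.filt.mem_of_le ((h.iff q hm).2 hq) hp hle

theorem mem_right (h : L.Shifted α ξ η) {p : Option (List A × Set V)} :
    p ∈ η ↔ L.ESmem p ∧ ∃ q, sh α q ∈ ξ ∧ L.ESle q p := by
  constructor
  · intro hp
    obtain ⟨z, hz, h1, h2⟩ := h.filt'.2.2.2 _ hp _ h.top'
    have hm := ESmem_sh (h.filt'.1 hz).1 h2
    exact ⟨(h.filt'.1 hp).1, z, (h.iff z hm).2 hz, h1⟩
  · rintro ⟨hp, q, hq, hle⟩
    exact h.filt'.mem_of_le ((h.iff q (h.filt.1 hq).1).1 hq) hp hle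

theorem unique_left {ξ' : Set (Option (List A × Set V))} (h : L.Shifted α ξ η)
    (h' : L.Shifted α ξ' η) : ξ = ξ' := by
  ext p
  rw [h.mem_left, h'.mem_left]

theorem unique_right {η' : Set (Option (List A × Set V))} (h : L.Shifted α ξ η)
    (h' : L.Shifted α ξ η') : η = η' := by
  ext p
  rw [h.mem_right, h'.mem_right]

theorem tight_right (hwlr : L.WeaklyLeftResolving) (h : L.Shifted α ξ η)
    (ht : L.IsTightESFilter ξ) : L.IsTightESFilter η := by
  refine tight_of_below hwlr h.filt' h.top' fun x hx hx₀ Z hZ hcov => ?_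
  have hxm := ESmem_sh (h.filt'.1 hx).1 hx₀
  rw [ESCover_iff hwlr] at hcov
  obtain ⟨-, ⟨z, hz, rfl⟩, hzξ⟩ := ht.2 (sh α x) ((h.iff x hxm).2 hx) (sh α '' Z) (hZ.image _) (by
    rw [ESCover_iff hwlr]
    refine ⟨?_, fun y hy hyx => ?_⟩
    · rintro - ⟨z, hz, rfl⟩
      exact ⟨ESmem_sh (hcov.1 z hz).1 (ESle_trans (hcov.1 z hz).2 hx₀), ESle_sh.2 (hcov.1 z hz).2⟩
    · obtain ⟨y, rfl⟩ := exists_sh (ESle_trans hyx (sh_le hxm))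
      obtain ⟨z, hz, m, hm, hmy, hmz⟩ := hcov.2 y (ESnz_sh.1 hy).1 (ESle_sh.1 hyx)
      exact ⟨_, ⟨z, hz, rfl⟩, sh α m, ESnz_sh.2 ⟨hm, ESle_trans hmy (ESnz_sh.1 hy).2⟩,
        ESle_sh.2 hmy, ESle_sh.2 hmz⟩)
  exact ⟨z, hz, (h.iff z (h.filt.1 hzξ).1).1 hzξ⟩

theorem tight_left (hwlr : L.WeaklyLeftResolving) (h : L.Shifted α ξ η)
    (ht : L.IsTightESFilter η) : L.IsTightESFilter ξ := by
  refine tight_of_below hwlr h.filt h.top fun x hx hx₀ Z hZ hcov => ?_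
  obtain ⟨x, rfl⟩ := exists_sh hx₀
  have hxm := (h.filt.1 hx).1
  rw [ESCover_iff hwlr] at hcov
  obtain ⟨z, hz, hzη⟩ := ht.2 x ((h.iff x hxm).1 hx) (sh α ⁻¹' Z)
    (hZ.preimage (sh_injective α).injOn) (by
    rw [ESCover_iff hwlr]
    refine ⟨fun z hz => ?_, fun y hy hyx => ?_⟩
    · exact ⟨(ESmem_of_sh (hcov.1 _ hz).1).1, ESle_sh.1 (hcov.1 _ hz).2⟩
    · have hy' := ESnz_sh.2 ⟨hy, ESle_trans hyx (ESmem_of_sh hxm).2⟩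
      obtain ⟨z, hz, m, hm, hmy, hmz⟩ := hcov.2 _ hy' (ESle_sh.2 hyx)
      obtain ⟨z, rfl⟩ := exists_sh (ESle_trans (hcov.1 _ hz).2 hx₀)
      obtain ⟨m, rfl⟩ := exists_sh (ESle_trans hmy (sh_le hy'.1))
      exact ⟨z, hz, m, (ESnz_sh.1 hm).1, ESle_sh.1 hmy, ESle_sh.1 hmz⟩)
  exact ⟨_, hz, (h.iff z (hcov.1 _ hz).1).2 hzη⟩

theorem hasWord_left (h : L.Shifted α ξ η) {w : LWord A}
    (hw : HasWord w η) : HasWord (wappend α w) ξ := by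
  refine ⟨fun β X hX => ?_, fun n hn hnw => ?_⟩
  · obtain ⟨-, q, hq, hm, hle⟩ := h.mem_left.1 hX
    obtain ⟨γ, C, rfl, -⟩ := ESnz_some (h.filt'.1 hq)
    obtain ⟨δ, hδ, -⟩ := hle
    have := isPre_wappend (α := α).2 (hw.1 γ C hq)
    dsimp only at hδ
    rw [hδ] at this
    exact this.left
  · rcases le_or_gt n α.length with hle | hlt
    · rw [wtake_wappend_left _ _ hle]
      have hwr : L.wr α = L.relR (L.wr (α.take n)) (α.drop n) := by
        rw [← wr_append, List.take_append_drop]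
      have hESle : L.ESle (some (α, L.wr α)) (some (α.take n, L.wr (α.take n))) :=
        ⟨α.drop n, (List.take_append_drop n α).symm, hwr.subset⟩
      have hne := nonempty_of_ESle (h.filt.1 h.top) hESle
      have hnil : α.take n ≠ [] := by
        rw [← List.length_pos_iff, List.length_take]
        omega
      exact ⟨_, h.filt.mem_of_le h.top ⟨⟨wr_mem hnil hne, subset_rfl⟩, hne.ne_empty⟩ hESle⟩
    · obtain ⟨m, rfl⟩ := Nat.exists_eq_add_of_lt hlt
      rw [add_assoc] at hnw ⊢
      rw [wlen_wappend, Nat.cast_add, ENat.add_le_add_iff_left (ENat.natCast_ne_top _)] at hnw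
      rw [wtake_wappend]
      obtain ⟨C, hC⟩ := hw.2 (m + 1) m.succ_pos hnw
      have htop := h.filt'.relR_mem (β := []) h.top' hC
      have hm : L.ESmem (sh α (some (wtake w (m + 1), L.relR (L.wr α) (wtake w (m + 1))))) :=
        ESmem_sh (h.filt'.1 htop).1 ⟨_, rfl, subset_rfl⟩
      exact ⟨_, (h.iff _ hm).2 htop⟩

theorem hasWord_right (h : L.Shifted α ξ η) {w : LWord A}
    (hw : HasWord (wappend α w) ξ) : HasWord w η := by
  refine ⟨fun β X hX => ?_, fun n hn hnw => ?_⟩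
  · obtain ⟨-, q, hq, hle⟩ := h.mem_right.1 hX
    obtain ⟨γ, C, hqe, -⟩ := ESnz_some (ESnz_sh.1 (h.filt.1 hq)).1
    subst hqe
    obtain ⟨δ, hδ, -⟩ := hle
    have := isPre_wappend.1 (hw.1 _ _ hq)
    dsimp only at hδ this
    rw [hδ] at this
    exact this.left
  · obtain ⟨C, hC⟩ := hw.2 (α.length + n) (by omega) (by
      rw [wlen_wappend, Nat.cast_add]
      exact add_le_add_right hnw _)
    rw [wtake_wappend] at hC
    exact ⟨C, (h.iff (some (wtake w n, C)) (h.filt.1 hC).1).1 hC⟩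

end Shifted

/-- The filter generated by the shifts of the elements of `η` that lie below `(ω,r(α),ω)`. -/
def shiftUp (L : LabelledSpace V Edg A) (α : List A) (η : Set (Option (List A × Set V))) :
    Set (Option (List A × Set V)) :=
  {p | L.ESmem p ∧ ∃ q ∈ η, L.ESmem (sh α q) ∧ L.ESle (sh α q) p}

/-- The filter generated by the elements whose shift by `α` lies in `ξ`. -/
def shiftDown (L : LabelledSpace V Edg A) (α : List A) (ξ : Set (Option (List A × Set V))) :
    Set (Option (List A × Set V)) :=
  {p | L.ESmem p ∧ ∃ q, sh α q ∈ ξ ∧ L.ESle q p}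

theorem shifted_shiftUp {α : List A} (hα : α ≠ []) {η : Set (Option (List A × Set V))}
    (hη : L.IsESFilter η) (htop : some ([], L.wr α) ∈ η) : L.Shifted α (L.shiftUp α η) η := by
  have hsα : sh α (some ([], L.wr α)) = some (α, L.wr α) := by simp [sh]
  have hne : (L.wr α).Nonempty := nonempty_iff_ne_empty.2 (hη.1 htop).1.2
  have hm : L.ESmem (some (α, L.wr α)) := ⟨⟨wr_mem hα hne, subset_rfl⟩, hne.ne_empty⟩
  have htop' : some (α, L.wr α) ∈ L.shiftUp α η :=
    ⟨hm, _, htop, by rwa [hsα], by rw [hsα]; exact ESle_refl _⟩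
  refine ⟨⟨?_, ⟨_, htop'⟩, ?_, ?_⟩, hη, htop', htop, fun p hp => ⟨?_, ?_⟩⟩
  · rintro p ⟨hp, q, hq, hqm, hle⟩
    exact ⟨hp, ne_none_of_ESle ⟨hqm, sh_ne_none.2 (hη.1 hq).2⟩ hle⟩
  · rintro p ⟨-, q, hq, hqm, hle⟩ r hr hpr
    exact ⟨hr, q, hq, hqm, ESle_trans hle hpr⟩
  · rintro p ⟨-, q, hq, hqm, hle⟩ p' ⟨-, q', hq', hqm', hle'⟩
    obtain ⟨z, hz, h1, h2⟩ := hη.2.2.2 q hq q' hq'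
    have hzm := ESmem_sh (hη.1 hz).1 (ESle_trans h1 (ESmem_of_sh hqm).2)
    exact ⟨sh α z, ⟨hzm, z, hz, hzm, ESle_refl _⟩, ESle_trans (ESle_sh.2 h1) hle,
      ESle_trans (ESle_sh.2 h2) hle'⟩
  · rintro ⟨-, q, hq, -, hle⟩
    exact hη.mem_of_le hq (ESmem_of_sh hp).1 (ESle_sh.1 hle)
  · intro h
    exact ⟨hp, p, h, hp, ESle_refl _⟩

theorem shifted_shiftDown {α : List A} {ξ : Set (Option (List A × Set V))}
    (hξ : L.IsESFilter ξ) (htop : some (α, L.wr α) ∈ ξ) : L.Shifted α ξ (L.shiftDown α ξ) := by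
  have hsα : sh α (some ([], L.wr α)) = some (α, L.wr α) := by simp [sh]
  have htop' : some ([], L.wr α) ∈ L.shiftDown α ξ :=
    ⟨(ESmem_of_sh (by rw [hsα]; exact (hξ.1 htop).1)).1, _, by rwa [hsα], ESle_refl _⟩
  refine ⟨hξ, ⟨?_, ⟨_, htop'⟩, ?_, ?_⟩, htop, htop', fun p hp => ⟨?_, ?_⟩⟩
  · rintro p ⟨hp, q, hq, hle⟩
    exact ⟨hp, ne_none_of_ESle (ESnz_sh.1 (hξ.1 hq)).1 hle⟩
  · rintro p ⟨-, q, hq, hle⟩ r hr hpr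
    exact ⟨hr, q, hq, ESle_trans hle hpr⟩
  · rintro p ⟨-, q, hq, hle⟩ p' ⟨-, q', hq', hle'⟩
    obtain ⟨z, hz, h1, h2⟩ := hξ.2.2.2 _ hq _ hq'
    obtain ⟨z, rfl⟩ := exists_sh (ESle_trans h1 (sh_le (hξ.1 hq).1))
    exact ⟨z, ⟨(ESmem_of_sh (hξ.1 hz).1).1, z, hz, ESle_refl _⟩, ESle_trans (ESle_sh.1 h1) hle,
      ESle_trans (ESle_sh.1 h2) hle'⟩
  · intro h
    exact ⟨(ESmem_of_sh hp).1, p, h, ESle_refl _⟩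
  · rintro ⟨-, q, hq, hle⟩
    exact hξ.mem_of_le hq hp (ESle_sh.2 hle)

/-! ### The maps `G` and `H` as shifts -/

theorem Hmap_eq {α : List A} {w : LWord A} {ξ : Set (Option (List A × Set V))}
    (hξ : L.IsESFilter ξ) (hw : HasWord (wappend α w) ξ) : L.Hmap α w ξ = L.shiftDown α ξ := by
  ext p
  refine and_congr_right fun hp => ⟨?_, ?_⟩
  · rintro ⟨n, hn, X, ⟨hX, C, hC, hCX⟩, hle⟩
    rw [xiN, wtake_wappend] at hC
    exact ⟨some (wtake w n, C), hC, ESle_trans (ESle_of_subset hCX) hle⟩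
  · rintro ⟨q, hq, hle⟩
    obtain ⟨⟨hqm, hq0⟩, -⟩ := ESnz_sh.1 (hξ.1 hq)
    obtain ⟨β, C, rfl, hC, -⟩ := ESnz_some (L := L) ⟨hqm, hq0⟩
    obtain ⟨h1, h2⟩ := isPre_wappend.1 (hw.1 _ _ hq)
    dsimp only at h1 h2
    refine ⟨β.length, h1, C, ⟨by rwa [h2], C, ?_, subset_rfl⟩, by rwa [h2]⟩
    change some (wtake (wappend α w) (α.length + β.length), C) ∈ ξ
    rwa [wtake_wappend, h2]

/-- If `(ω,r(α),ω) ∈ η`, the elements of `g_{(α)β}(η_{|β|})` are sets `D` with `(β,D,β) ∈ η` and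
`D ⊆ r(αβ)`. -/
theorem mem_of_inter (hwlr : L.WeaklyLeftResolving) {α β : List A}
    {η : Set (Option (List A × Set V))} (hη : L.IsESFilter η) (htop : some ([], L.wr α) ∈ η)
    {C : Set V} (hC : some (β, C) ∈ η) :
    some (β, C ∩ L.wr (α ++ β)) ∈ η ∧ L.ESmem (sh α (some (β, C ∩ L.wr (α ++ β)))) := by
  have h1 := hη.inter_mem hwlr hC (hη.relR_mem (β := []) htop hC)
  change some (β, C ∩ L.relR (L.wr α) β) ∈ η at h1
  rw [← wr_append] at h1
  exact ⟨h1, ESmem_sh (hη.1 h1).1 ⟨β, rfl, by rw [← wr_append]; exact inter_subset_right⟩⟩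

theorem Jfamily_of_ne {α : List A} {w : LWord A} (hw : w ≠ .inl []) (F : ℕ → Set (Set V)) :
    L.Jfamily α w F = fun i =>
      if i ≤ α.length then
        L.fmap (α.take i) (α.drop i ++ wtake w 1) (L.gmap α (wtake w 1) (F 1))
      else L.gmap α (wtake w (i - α.length)) (F (i - α.length)) := by
  rcases w with (- | ⟨a, l⟩) | f
  · exact absurd rfl hw
  · rfl
  · rfl

theorem one_le_wlen {w : LWord A} (hw : w ≠ .inl []) : ((1 : ℕ) : ℕ∞) ≤ wlen w := by
  rcases w with (- | ⟨a, l⟩) | f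
  · exact absurd rfl hw
  · simp [wlen]
  · simp [wlen]

/-- The members `J_i` of the family defining `G` with `i` small are redundant: the filter is
generated by the sets `g_{(α)β_{1,n}}(η_n)`. -/
theorem Gmap_eq (hwlr : L.WeaklyLeftResolving) {α : List A} {w : LWord A}
    {η : Set (Option (List A × Set V))} (hη : L.IsESFilter η) (hw : HasWord w η)
    (htop : some ([], L.wr α) ∈ η) : L.Gmap α w η = L.shiftUp α η := by
  -- An element of `g_{(α)β}(η_{|β|})` generates an element of the shifted filter.
  have key : ∀ (p : Option (List A × Set V)) (n : ℕ) (D : Set V),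
      D ∈ L.gmap α (wtake w n) (L.xiN w η n) → L.ESle (some (α ++ wtake w n, D)) p →
      ∃ q ∈ η, L.ESmem (sh α q) ∧ L.ESle (sh α q) p := by
    rintro p n D ⟨C, hC, rfl⟩ hle
    obtain ⟨h1, h2⟩ := mem_of_inter hwlr hη htop hC
    exact ⟨_, h1, h2, hle⟩
  ext p
  refine and_congr_right fun hp => ?_
  rcases eq_or_ne w (.inl []) with rfl | hne
  · constructor
    · rintro ⟨i, hi, X, hX, hle⟩
      rw [wlen_wappend] at hi
      have hi : i ≤ α.length := by simpa [wlen] using hi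
      rw [wtake_wappend_left _ _ hi] at hle
      simp only [Jfamily] at hX
      refine key p 0 (L.relR X (α.drop i)) ?_ (ESle_trans ?_ hle)
      · split_ifs at hX with hlt
        · exact hX.2
        · rw [List.drop_eq_nil_of_le (not_lt.1 hlt)]
          exact hX
      · exact ⟨α.drop i, by simp [wtake], subset_rfl⟩
    · rintro ⟨q, hq, hm, hle⟩
      obtain ⟨β, C, rfl, -⟩ := ESnz_some (hη.1 hq)
      have hβ : β = [] := by
        have := (hw.1 β C hq).2
        simpa [wtake] using this.symm
      subst hβ
      have hCs : C ⊆ L.wr (α ++ []) := hm.1.2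
      refine ⟨α.length, by simp [wlen, wappend], C, ?_, ?_⟩
      · simp only [Jfamily, lt_irrefl, if_false]
        exact ⟨C, hq, (inter_eq_left.2 hCs).symm⟩
      · rw [wtake_wappend_left _ _ le_rfl, List.take_length]
        simpa [sh] using hle
  · rw [Jfamily_of_ne hne]
    constructor
    · rintro ⟨i, hi, X, hX, hle⟩
      dsimp only at hX
      split_ifs at hX with hia
      · rw [wtake_wappend_left _ _ hia] at hle
        have hle' : L.ESle (some (α ++ wtake w 1, L.relR X (α.drop i ++ wtake w 1)))
            (some (α.take i, X)) := ⟨_, by simp [← List.append_assoc], subset_rfl⟩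
        exact key p 1 _ hX.2 (ESle_trans hle' hle)
      · obtain ⟨n, rfl⟩ := Nat.exists_eq_add_of_le (not_le.1 hia).le
        rw [Nat.add_sub_cancel_left] at hX
        rw [wtake_wappend] at hle
        exact key p n X hX hle
    · rintro ⟨q, hq, hm, hle⟩
      -- Pass to an element of `η` with nonempty word.
      obtain ⟨C₁, hC₁⟩ := hw.2 1 one_pos (one_le_wlen hne)
      obtain ⟨z, hz, hzq, hz1⟩ := hη.2.2.2 _ hq _ hC₁
      obtain ⟨β, C, rfl, -⟩ := ESnz_some (hη.1 hz)
      have hzm := ESmem_sh (hη.1 hz).1 (ESle_trans hzq (ESmem_of_sh hm).2)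
      have hpos : 0 < β.length := by
        obtain ⟨γ, hγ, -⟩ := hz1
        dsimp only at hγ
        rw [hγ, List.length_append, length_wtake (one_le_wlen hne)]
        omega
      obtain ⟨h1, h2⟩ := hw.1 β C hz
      refine ⟨α.length + β.length, ?_, C, ?_, ?_⟩
      · rw [wlen_wappend, Nat.cast_add]
        exact add_le_add_right h1 _
      · dsimp only
        rw [if_neg (by omega), Nat.add_sub_cancel_left, h2]
        refine ⟨C, ?_, (inter_eq_left.2 hzm.1.2).symm⟩
        change some (wtake w β.length, C) ∈ η
        rwa [h2]
      · rw [wtake_wappend, h2]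
        exact ESle_trans (ESle_sh.2 hzq) hle

theorem mem_TwP_iff {α : List A} (hα : α ≠ []) {w : LWord A}
    {η : Set (Option (List A × Set V))} :
    η ∈ L.TwP α w ↔ η ∈ L.Tw w ∧ IsUltrafilterIn (L.Bw []) (L.xiN w η 0) ∧
      some ([], L.wr α) ∈ η := by
  rw [← mem_xiN_zero (w := w)]
  cases α with
  | nil => exact absurd rfl hα
  | cons a l => rfl

/-- A filter with word `αβ` contains `(α,r(α),α)`. -/
theorem top_mem {α : List A} (hα : α ≠ []) {w : LWord A} {ξ : Set (Option (List A × Set V))}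
    (hξ : L.IsESFilter ξ) (hw : HasWord (wappend α w) ξ) : some (α, L.wr α) ∈ ξ := by
  obtain ⟨C, hC⟩ := hw.2 α.length (List.length_pos_iff.2 hα) (by
    rw [wlen_wappend]
    exact le_self_add)
  rw [wtake_wappend_left _ _ le_rfl, List.take_length] at hC
  have hle := ESle_top (hξ.1 hC).1.1
  have hne := nonempty_of_ESle (hξ.1 hC) hle
  exact hξ.mem_of_le hC ⟨⟨wr_mem hα hne, subset_rfl⟩, hne.ne_empty⟩ hle

theorem Gmap_shifted (hwlr : L.WeaklyLeftResolving) {α : List A} (hα : α ≠ []) {w : LWord A}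
    {η : Set (Option (List A × Set V))} (hη : η ∈ L.TwP α w) :
    L.Shifted α (L.Gmap α w η) η ∧ L.Gmap α w η ∈ L.Tw (wappend α w) := by
  obtain ⟨hT, -, htop⟩ := (mem_TwP_iff hα).1 hη
  obtain ⟨ht, hw⟩ := (mem_Tw_iff hwlr).1 hT
  rw [Gmap_eq hwlr ht.1 hw htop]
  have h := shifted_shiftUp hα ht.1 htop
  exact ⟨h, (mem_Tw_iff hwlr).2 ⟨h.tight_left hwlr ht, h.hasWord_left hw⟩⟩

theorem Hmap_shifted (hwlr : L.WeaklyLeftResolving) (hc : L.ClosedUnderRelComplements)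
    {α : List A} (hα : α ≠ []) {w : LWord A}
    {ξ : Set (Option (List A × Set V))} (hξ : ξ ∈ L.Tw (wappend α w)) :
    L.Shifted α ξ (L.Hmap α w ξ) ∧ L.Hmap α w ξ ∈ L.TwP α w := by
  obtain ⟨ht, hw⟩ := (mem_Tw_iff hwlr).1 hξ
  rw [Hmap_eq ht.1 hw]
  have h := shifted_shiftDown ht.1 (top_mem hα ht.1 hw)
  have ht' := h.tight_right hwlr ht
  refine ⟨h, (mem_TwP_iff hα).2 ⟨(mem_Tw_iff hwlr).2 ⟨ht', h.hasWord_right hw⟩,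
    ht'.ultra hwlr hc ⟨L.wr α, mem_xiN_zero.2 h.top'⟩, h.top'⟩⟩

end LabelledSpace


section
variable {V Edg A : Type*} (L : LabelledSpace V Edg A)

/-- `H_{[α]β} ∘ G_{(α)β} = id` on `T_{(α)β}` and `G_{(α)β} ∘ H_{[α]β} = id` on `T_{αβ}`;
in particular `G_{(α)β} : T_{(α)β} → T_{αβ}` is a bijection with inverse `H_{[α]β}`. -/
theorem Hmap_Gmap_inverses (hwlr : L.WeaklyLeftResolving)
    (hc : L.ClosedUnderRelComplements)
    (α : List A) (hα : α ≠ []) (hαl : L.IsLbl α)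
    (w : LWord A) (hw : L.IsLWord w) (hαw : L.IsLWord (wappend α w)) :
    (∀ ξ ∈ L.TwP α w, L.Hmap α w (L.Gmap α w ξ) = ξ) ∧
    (∀ ξ ∈ L.Tw (wappend α w), L.Gmap α w (L.Hmap α w ξ) = ξ) ∧
    Set.BijOn (L.Gmap α w) (L.TwP α w) (L.Tw (wappend α w)) := by
  refine ⟨fun ξ hξ => ?_, fun ξ hξ => ?_, fun ξ hξ => ?_, fun ξ hξ ξ' hξ' heq => ?_, fun ξ hξ => ?_⟩
  · obtain ⟨h1, h2⟩ := LabelledSpace.Gmap_shifted hwlr hα hξ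
    exact (LabelledSpace.Hmap_shifted hwlr hc hα h2).1.unique_right h1
  · obtain ⟨h1, h2⟩ := LabelledSpace.Hmap_shifted hwlr hc hα hξ
    exact (LabelledSpace.Gmap_shifted hwlr hα h2).1.unique_left h1
  · exact (LabelledSpace.Gmap_shifted hwlr hα hξ).2
  · have h := (LabelledSpace.Gmap_shifted hwlr hα hξ).1
    rw [heq] at h
    exact h.unique_right (LabelledSpace.Gmap_shifted hwlr hα hξ').1
  · obtain ⟨h1, h2⟩ := LabelledSpace.Hmap_shifted hwlr hc hα hξ
    exact ⟨_, h2, (LabelledSpace.Gmap_shifted hwlr hα h2).1.unique_left h1⟩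

end
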